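/- arXiv:1502.01490 — 4 statements merged into one kernel-verified Lean document; each statement's English description precedes it below -/
import Mathlib

section
/- Let l ≥ 2 be an integer, q ∈ [0,1], and let B_1, …, B_l be independent Bernoulli(q) random variables. Let M be the number of indices i ∈ {1,…,l} such that B_i = 1 and either B_1 = … = B_{i−1} = 1 or B_{i+1} = … = B_l = 1 (i.e., the number of indices lying in the maximal initial run of 1's or in the maximal final run of 1's). Then for every integer m with 0 < m ≤ l−2, P(M = m) = (m+1) q^m (1−q)². -/
open MeasureTheory Filter
open scoped ENNReal

noncomputable section

/-- Bernoulli measure on `Bool` with success probability `q`. -/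
def berMeasure (q : ℝ) : Measure Bool :=
  ENNReal.ofReal (1 - q) • Measure.dirac false + ENNReal.ofReal q • Measure.dirac true

/-- The number of indices lying in the maximal initial run of `1`s or in the maximal
final run of `1`s of the word `ω : Fin l → Bool`. -/
def runCount (l : ℕ) (ω : Fin l → Bool) : ℕ :=
  {i : Fin l | ω i = true ∧
    ((∀ j, j < i → ω j = true) ∨ (∀ j, i < j → ω j = true))}.ncard

/-!
A word with at least one `0` has a first `0`, at `a`, and a last `0`, at `c`, and the two runs of
`1`s are the sites before `a` and after `c`. Having exactly these extreme zeros is a product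
event: `1` outside `[a, c]`, `0` at `a` and `c`, anything in between. When the runs have total
length `m ≤ l - 2`, the zeros `a` and `c` are distinct, so each such event has probability
`q ^ m * (1 - q) ^ 2`, and there are `m + 1` ways to split `m` between the two runs.
-/

section ExtremeZeros

variable {α : Type*} [LinearOrder α] {a c i : α} {ω : α → Bool}

/-- The event that the first `0` of a word is at `a` and its last `0` at `c`. -/
def extremeZeros (a c : α) : Set (α → Bool) :=
  {ω | IsLeast {i | ω i = false} a ∧ IsGreatest {i | ω i = false} c}

lemma forall_le_eq_true_iff_lt_of_isLeast (ha : IsLeast {i | ω i = false} a) :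
    (∀ j ≤ i, ω j = true) ↔ i < a := by
  refine ⟨fun h => not_le.1 fun hai => ?_, fun hia j hji => ?_⟩
  · exact Bool.false_ne_true (ha.1.symm.trans (h a hai))
  · exact Bool.eq_true_of_not_eq_false fun hj => (hji.trans_lt hia).not_ge (ha.2 hj)

lemma forall_ge_eq_true_iff_lt_of_isGreatest (hc : IsGreatest {i | ω i = false} c) :
    (∀ j ≥ i, ω j = true) ↔ c < i :=
  forall_le_eq_true_iff_lt_of_isLeast (α := αᵒᵈ) hc

lemma pairwise_disjoint_extremeZeros :
    Pairwise (Function.onFun Disjoint fun p : α × α => extremeZeros p.1 p.2) := by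
  refine fun p p' hp => Set.disjoint_left.2 fun ω h h' => hp ?_
  exact Prod.ext (h.1.unique h'.1) (h.2.unique h'.2)

lemma exists_mem_extremeZeros [Finite α] (h : ∃ i, ω i = false) :
    ∃ a c, ω ∈ extremeZeros a c := by
  obtain ⟨a, ha, ha'⟩ := Set.exists_min_image {i | ω i = false} id (Set.toFinite _) h
  obtain ⟨c, hc, hc'⟩ := Set.exists_max_image {i | ω i = false} id (Set.toFinite _) h
  exact ⟨a, c, ⟨ha, ha'⟩, hc, hc'⟩

lemma extremeZeros_eq_univ_pi (hac : a ≤ c) :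
    extremeZeros a c = Set.univ.pi fun i =>
      if i < a ∨ c < i then {true} else if i ∈ Set.Ioo a c then Set.univ else {false} := by
  ext ω
  simp only [Set.mem_univ_pi]
  constructor
  · rintro ⟨ha, hc⟩ i
    split_ifs with hout hin
    · refine Bool.eq_true_of_not_eq_false fun h0 => ?_
      exact hout.elim (ha.2 h0).not_gt (hc.2 h0).not_gt
    · trivial
    · obtain rfl | rfl : i = a ∨ i = c := by grind
      exacts [ha.1, hc.1]
  · intro h
    have hzero {i : α} (h0 : ω i = false) : a ≤ i ∧ i ≤ c := by
      by_contra! hi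
      have h1 := h i
      rw [if_pos (by grind)] at h1
      exact Bool.false_ne_true (h0.symm.trans h1)
    exact ⟨⟨by simpa [hac.not_gt] using h a, fun i h0 => (hzero h0).1⟩,
      ⟨by simpa [hac.not_gt] using h c, fun i h0 => (hzero h0).2⟩⟩

lemma disjoint_Iio_Ioi [LocallyFiniteOrderBot α] [LocallyFiniteOrderTop α] (hac : a ≤ c) :
    Disjoint (Finset.Iio a) (Finset.Ioi c) :=
  Finset.disjoint_coe.1 <| by simpa using (Set.Ioi_disjoint_Iio_of_le hac).symm

lemma measure_pi_extremeZeros [Fintype α] [LocallyFiniteOrder α] [LocallyFiniteOrderBot α]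
    [LocallyFiniteOrderTop α] (μ : Measure Bool) [SigmaFinite μ] (hac : a < c) :
    Measure.pi (fun _ : α => μ) (extremeZeros a c) =
      μ {true} ^ ((Finset.Iio a).card + (Finset.Ioi c).card) * μ {false} ^ 2 *
        μ Set.univ ^ (Finset.Ioo a c).card := by
  have hout : Finset.univ.filter (fun i => i < a ∨ c < i) =
      (Finset.Iio a).disjUnion (Finset.Ioi c) (disjoint_Iio_Ioi hac.le) := by
    ext i
    simp
  have hin : Finset.univ.filter (fun i => ¬(i < a ∨ c < i) ∧ i ∈ Set.Ioo a c) =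
      Finset.Ioo a c := by
    ext i
    grind
  have hends : Finset.univ.filter (fun i => ¬(i < a ∨ c < i) ∧ i ∉ Set.Ioo a c) = {a, c} := by
    ext i
    grind
  rw [extremeZeros_eq_univ_pi hac.le, Measure.pi_pi]
  simp only [apply_ite μ, Finset.prod_ite, Finset.prod_const, Finset.filter_filter]
  rw [hout, hin, hends, Finset.card_pair hac.ne, Finset.card_disjUnion]
  ring

end ExtremeZeros

section RunCount

variable {l m : ℕ}

lemma runCount_of_mem_extremeZeros {a c : Fin l} {ω : Fin l → Bool}
    (hω : ω ∈ extremeZeros a c) : runCount l ω = a + c.rev := by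
  have hruns : {i : Fin l | ω i = true ∧
      ((∀ j, j < i → ω j = true) ∨ (∀ j, i < j → ω j = true))} =
      ((Finset.Iio a ∪ Finset.Ioi c : Finset (Fin l)) : Set (Fin l)) := by
    ext i
    simp [← forall_le_eq_true_iff_lt_of_isLeast hω.1,
      ← forall_ge_eq_true_iff_lt_of_isGreatest hω.2, le_iff_lt_or_eq, or_imp, forall_and,
      and_or_left, and_comm]
  have hac : a ≤ c := hω.1.2 hω.2.1
  rw [runCount, hruns, Set.ncard_coe_finset, Finset.card_union_of_disjoint (disjoint_Iio_Ioi hac),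
    Fin.card_Iio, Fin.card_Ioi, Fin.val_rev]
  omega

lemma runCount_of_forall_eq_true {ω : Fin l → Bool} (hω : ∀ i, ω i = true) :
    runCount l ω = l := by
  simp [runCount, hω]

/-- The positions `(a, c)` that are the first and the last `0` of words whose initial run of `1`s,
of length `a`, and final run, of length `c.rev`, have total length `m`. Nothing forces `a ≤ c`:
the event `extremeZeros a c` is empty otherwise. -/
def extremePairs (l m : ℕ) : Finset (Fin l × Fin l) :=
  {p | (p.1 : ℕ) + p.2.rev = m}

lemma mem_extremePairs {p : Fin l × Fin l} :
    p ∈ extremePairs l m ↔ (p.1 : ℕ) + p.2.rev = m := by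
  simp [extremePairs]

lemma card_extremePairs (hm : m < l) : (extremePairs l m).card = m + 1 := by
  rw [← Finset.Nat.card_antidiagonal]
  refine Finset.card_nbij (fun p => (p.1, p.2.rev)) ?_ ?_ ?_
  · intro p hp
    simpa using mem_extremePairs.1 hp
  · rintro ⟨a, c⟩ - ⟨a', c'⟩ - h
    simpa [Fin.val_inj, -Fin.val_rev] using h
  · rintro ⟨j, k⟩ hjk
    have hjk : j + k = m := by simpa using hjk
    refine ⟨(⟨j, by omega⟩, Fin.rev ⟨k, by omega⟩), ?_, ?_⟩
    · simpa only [Finset.mem_coe, mem_extremePairs, Fin.rev_rev] using hjk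
    · simp only [Fin.rev_rev]

lemma setOf_runCount_eq_biUnion (hm : m < l) :
    {ω : Fin l → Bool | runCount l ω = m} = ⋃ p ∈ extremePairs l m, extremeZeros p.1 p.2 := by
  ext ω
  simp only [Set.mem_ofPred_eq, Set.mem_iUnion, exists_prop, mem_extremePairs]
  constructor
  · intro hω
    have hzero : ∃ i, ω i = false := by
      by_contra! h
      exact hm.ne' ((runCount_of_forall_eq_true fun i => by simpa using h i).symm.trans hω)
    obtain ⟨a, c, hac⟩ := exists_mem_extremeZeros hzero
    exact ⟨(a, c), (runCount_of_mem_extremeZeros hac).symm.trans hω, hac⟩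
  · rintro ⟨p, hp, hω⟩
    exact (runCount_of_mem_extremeZeros hω).trans hp

lemma measure_pi_extremeZeros_of_mem_extremePairs (μ : Measure Bool) [SigmaFinite μ]
    (hm : m + 2 ≤ l) {p : Fin l × Fin l} (hp : p ∈ extremePairs l m) :
    Measure.pi (fun _ : Fin l => μ) (extremeZeros p.1 p.2) =
      μ {true} ^ m * μ {false} ^ 2 * μ Set.univ ^ (l - 2 - m) := by
  have hruns : (p.1 : ℕ) + (l - 1 - p.2) = m := by
    rw [← mem_extremePairs.1 hp, Fin.val_rev]
    omega
  have hbetween : (p.2 : ℕ) - p.1 - 1 = l - 2 - m := by omega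
  have hac : p.1 < p.2 := Fin.lt_def.2 (by omega)
  rw [measure_pi_extremeZeros μ hac, Fin.card_Iio, Fin.card_Ioi, Fin.card_Ioo, hruns, hbetween]

theorem runCount_eq_prob_general (μ : Measure Bool) [SigmaFinite μ] (hm : m + 2 ≤ l) :
    Measure.pi (fun _ : Fin l => μ) {ω : Fin l → Bool | runCount l ω = m} =
      (m + 1) * (μ {true} ^ m * μ {false} ^ 2 * μ Set.univ ^ (l - 2 - m)) := by
  rw [setOf_runCount_eq_biUnion (by omega),
    measure_biUnion_finset (pairwise_disjoint_extremeZeros.set_pairwise _)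
      fun _ _ => (Set.toFinite _).measurableSet,
    Finset.sum_congr rfl fun _ => measure_pi_extremeZeros_of_mem_extremePairs μ hm,
    Finset.sum_const, card_extremePairs (by omega), nsmul_eq_mul, Nat.cast_succ]

end RunCount

section Bernoulli

variable {q : ℝ}

lemma berMeasure_singleton_true : berMeasure q {true} = ENNReal.ofReal q := by
  simp [berMeasure]

lemma berMeasure_singleton_false : berMeasure q {false} = ENNReal.ofReal (1 - q) := by
  simp [berMeasure]

lemma isProbabilityMeasure_berMeasure (hq : q ∈ Set.Icc (0 : ℝ) 1) :
    IsProbabilityMeasure (berMeasure q) where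
  measure_univ := by
    simp [berMeasure, ← ENNReal.ofReal_add (sub_nonneg.2 hq.2) hq.1]

end Bernoulli

/-- for `B_1, …, B_l` i.i.d. Bernoulli(q) with `l ≥ 2`, the number `M`
of indices in the maximal initial or final run of `1`s satisfies
`P(M = m) = (m+1) q^m (1-q)²` for every `0 < m ≤ l-2`. -/
theorem runCount_eq_prob (l : ℕ) (hl : 2 ≤ l) (q : ℝ) (hq : q ∈ Set.Icc (0 : ℝ) 1)
    (m : ℕ) (hm0 : 0 < m) (hm : m ≤ l - 2) :
    (Measure.pi fun _ : Fin l => berMeasure q) {ω : Fin l → Bool | runCount l ω = m}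
      = ENNReal.ofReal ((m + 1) * q ^ m * (1 - q) ^ 2) := by
  have := isProbabilityMeasure_berMeasure hq
  have hq0 : 0 ≤ q := hq.1
  have hq1 : 0 ≤ 1 - q := sub_nonneg.2 hq.2
  have hcast : ENNReal.ofReal ((m : ℝ) + 1) = m + 1 := by
    exact_mod_cast ENNReal.ofReal_natCast (m + 1)
  rw [runCount_eq_prob_general _ (by omega), berMeasure_singleton_true,
    berMeasure_singleton_false, measure_univ, one_pow, mul_one, mul_assoc ((m : ℝ) + 1),
    ENNReal.ofReal_mul (by positivity), ENNReal.ofReal_mul (by positivity),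
    ENNReal.ofReal_pow hq0, ENNReal.ofReal_pow hq1, hcast]
end
end

section
/- Let c > 0 and t₁ > 0 be real numbers with c t₁ < 1, and define recursively t_{k+1} = c · t_k · Σ_{l=1}^{k} t_l for k ≥ 1. Then for every α with 0 < α < 1 satisfying (1−α)α > c t₁, one has t_k ≤ α^{k−1} t₁ for all k ≥ 1, and consequently Σ_{l=1}^{∞} t_l ≤ t₁/(1−α). -/
open Filter

/- Passing to norms turns the recursion into `u (k + 1) ≤ c * u k * ∑ i ≤ k, u i` with `u ≥ 0`.
As long as `u i ≤ α ^ i * u 0` for `i ≤ k`, the sum stays below the full geometric sum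
`u 0 / (1 - α)`, and `c * u 0 / (1 - α) ≤ α` is exactly what makes the next ratio at most `α`. -/

section LinearOrderedField

variable {K : Type*} [Field K] [LinearOrder K] [IsStrictOrderedRing K] {α : K} {u : ℕ → K}

lemma sum_range_le_of_le_geometric {a : K} (ha : 0 ≤ a) (hα0 : 0 ≤ α) (hα1 : α < 1)
    {n : ℕ} (hu : ∀ i < n, u i ≤ α ^ i * a) : ∑ i ∈ Finset.range n, u i ≤ a / (1 - α) := by
  have hgeom : ∑ i ∈ Finset.range n, α ^ i ≤ 1 / (1 - α) := by
    simpa only [Finset.range_eq_Ico, pow_zero] using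
      geom_sum_Ico_le_of_lt_one (m := 0) (n := n) hα0 hα1
  calc ∑ i ∈ Finset.range n, u i
      ≤ ∑ i ∈ Finset.range n, α ^ i * a :=
        Finset.sum_le_sum fun i hi ↦ hu i (Finset.mem_range.mp hi)
    _ = (∑ i ∈ Finset.range n, α ^ i) * a := (Finset.sum_mul _ _ _).symm
    _ ≤ 1 / (1 - α) * a := mul_le_mul_of_nonneg_right hgeom ha
    _ = a / (1 - α) := one_div_mul_eq_div _ _

lemma le_geometric_of_le_mul_sum_range {c : K} (hc : 0 ≤ c) (hu : ∀ n, 0 ≤ u n)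
    (hrec : ∀ n, u (n + 1) ≤ c * u n * ∑ i ∈ Finset.range (n + 1), u i)
    (hα0 : 0 ≤ α) (hα1 : α < 1) (hα : c * u 0 ≤ (1 - α) * α) (n : ℕ) :
    u n ≤ α ^ n * u 0 := by
  have hratio : c * (u 0 / (1 - α)) ≤ α := by
    rwa [← mul_div_assoc, div_le_iff₀' (sub_pos.mpr hα1)]
  induction n using Nat.strong_induction_on with
  | _ n ih =>
    cases n with
    | zero => rw [pow_zero, one_mul]
    | succ n =>
      have hsum : ∑ i ∈ Finset.range (n + 1), u i ≤ u 0 / (1 - α) :=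
        sum_range_le_of_le_geometric (hu 0) hα0 hα1 ih
      calc u (n + 1)
          ≤ c * u n * ∑ i ∈ Finset.range (n + 1), u i := hrec n
        _ ≤ c * u n * (u 0 / (1 - α)) := mul_le_mul_of_nonneg_left hsum (mul_nonneg hc (hu n))
        _ = c * (u 0 / (1 - α)) * u n := mul_right_comm _ _ _
        _ ≤ α * (α ^ n * u 0) := mul_le_mul hratio (ih n n.lt_succ_self) (hu n) hα0
        _ = α ^ (n + 1) * u 0 := by rw [pow_succ', mul_assoc]

end LinearOrderedField

theorem geometric_bound_recursive_sequence_general {A : Type*} [NonUnitalSeminormedRing A]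
    (c : A) (t : ℕ → A) (hrec : ∀ k ≥ 1, t (k + 1) = c * t k * ∑ l ∈ Finset.Icc 1 k, t l)
    (α : ℝ) (hα0 : 0 ≤ α) (hα1 : α < 1) (hα : ‖c‖ * ‖t 1‖ ≤ (1 - α) * α) :
    (∀ k ≥ 1, ‖t k‖ ≤ α ^ (k - 1) * ‖t 1‖) ∧ Summable (fun l ↦ ‖t (l + 1)‖) ∧
      ∑' l, ‖t (l + 1)‖ ≤ ‖t 1‖ / (1 - α) := by
  have hnorm_rec (n : ℕ) : ‖t (n + 1 + 1)‖ ≤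
      ‖c‖ * ‖t (n + 1)‖ * ∑ i ∈ Finset.range (n + 1), ‖t (i + 1)‖ := by
    rw [hrec (n + 1) n.succ_pos, Finset.range_eq_Ico,
      Finset.sum_Ico_add' (fun l ↦ ‖t l‖) 0 (n + 1) 1]
    exact norm_mul_le_of_le (norm_mul_le _ _) (norm_sum_le _ _)
  have hgeom (n : ℕ) : ‖t (n + 1)‖ ≤ α ^ n * ‖t 1‖ :=
    le_geometric_of_le_mul_sum_range (u := fun n ↦ ‖t (n + 1)‖) (norm_nonneg c)
      (fun _ ↦ norm_nonneg _) hnorm_rec hα0 hα1 hα n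
  have hsum (n : ℕ) : ∑ l ∈ Finset.range n, ‖t (l + 1)‖ ≤ ‖t 1‖ / (1 - α) :=
    sum_range_le_of_le_geometric (norm_nonneg _) hα0 hα1 fun i _ ↦ hgeom i
  refine ⟨fun k hk ↦ ?_, summable_of_sum_range_le (fun _ ↦ norm_nonneg _) hsum,
    Real.tsum_le_of_sum_range_le (fun _ ↦ norm_nonneg _) hsum⟩
  simpa only [Nat.sub_add_cancel hk] using hgeom (k - 1)

/-- Lemma 4.3: if `t_{k+1} = c t_k Σ_{l=1}^k t_l` with `c t₁ < 1`,
then for every `0 < α < 1` with `(1-α) α > c t₁` one has `t_k ≤ α^{k-1} t₁` for all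
`k ≥ 1`, and hence `Σ_{l=1}^∞ t_l ≤ t₁/(1-α)`. -/
theorem geometric_bound_recursive_sequence
    (c t₁ : ℝ) (hc : 0 < c) (ht₁ : 0 < t₁) (hct : c * t₁ < 1)
    (t : ℕ → ℝ) (ht1 : t 1 = t₁)
    (hrec : ∀ k ≥ 1, t (k + 1) = c * t k * ∑ l ∈ Finset.Icc 1 k, t l)
    (α : ℝ) (hα0 : 0 < α) (hα1 : α < 1) (hα : c * t₁ < (1 - α) * α) :
    (∀ k ≥ 1, t k ≤ α ^ (k - 1) * t₁) ∧ (∑' l : ℕ, t (l + 1) ≤ t₁ / (1 - α)) := by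
  have hnorm : ‖t 1‖ = t₁ := by rw [ht1, Real.norm_of_nonneg ht₁.le]
  obtain ⟨hgeom, hsummable, htsum⟩ := geometric_bound_recursive_sequence_general c t hrec α hα0.le
    hα1 (by rw [hnorm, Real.norm_of_nonneg hc.le]; exact hα.le)
  rw [hnorm] at hgeom htsum
  exact ⟨fun k hk ↦ (Real.le_norm_self _).trans (hgeom k hk),
    (Real.le_norm_self _).trans ((norm_tsum_le_tsum_norm hsummable).trans htsum)⟩
end

section
/- Let (t_n) be a sequence of positive integers with t_n → ∞ and let (p_n) be a sequence in (0,1) with t_n p_n → 0. Then P(Bin(t_n, p_n) ≥ 2) = (t_n p_n)²/2 − ( t_n p_n²/2 + (t_n p_n)³/3 )(1 + o(1)) as n → ∞; that is, ( P(Bin(t_n,p_n) ≥ 2) − (t_n p_n)²/2 ) / ( t_n p_n²/2 + (t_n p_n)³/3 ) → −1. -/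
open Filter

/-!
The factorial-moment sums of `Bin(t, p)` are `Sₖ = C(t, k) pᵏ`, and the Bonferroni inequalities
`S₂ - 2 S₃ ≤ P(Bin(t, p) ≥ 2) ≤ S₂ - 2 S₃ + 3 S₄` pin the probability down to order `(tp)⁴`.
Here `S₂ = (tp)² / 2 - tp² / 2` and `2 S₃ = (tp)³ / 3 - t²p³ + 2tp³ / 3`, while
`tp³ ≤ t²p³` and `S₄ ≤ (tp)⁴ / 24`. Since `t²p³` and `(tp)⁴` are smaller than `tp² / 2` and
`(tp)³ / 3` respectively by a factor of order `tp`, what remains is negligible.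
-/

section Bonferroni

variable {R : Type*} [CommRing R]

/-- The probability that a `Bin(t, p)` variable is at least `2`, as a polynomial in the success
probability `p`. The truncated subtraction in the exponent is harmless: for `t = 0` the last term
vanishes, and so does the whole expression. -/
def probBinomialGeTwo (t : ℕ) (p : R) : R :=
  1 - (1 - p) ^ t - (t : R) * p * (1 - p) ^ (t - 1)

-- The added term is the probability that the second success occurs at trial `t + 2`.
theorem probBinomialGeTwo_add_two (t : ℕ) (p : R) :
    probBinomialGeTwo (t + 2) p =
      probBinomialGeTwo (t + 1) p + ((t : R) + 1) * p ^ 2 * (1 - p) ^ t := by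
  simp only [probBinomialGeTwo, Nat.add_sub_cancel, show t + 2 - 1 = t + 1 from rfl]
  push_cast
  ring

theorem cast_add_one_mul_choose (t k : ℕ) :
    ((t : R) + 1) * t.choose k = (k + 1) * (t + 1).choose (k + 1) := by
  have h := congrArg (Nat.cast (R := R)) (Nat.add_one_mul_choose_eq t k)
  push_cast at h
  rw [h, mul_comm]

variable [LinearOrder R] [IsStrictOrderedRing R] {p : R}

theorem one_sub_mul_le_one_sub_pow (hp : p ≤ 2) (t : ℕ) : 1 - t * p ≤ (1 - p) ^ t := by
  simpa only [mul_neg, ← sub_eq_add_neg] using one_add_mul_le_pow (neg_le_neg hp) t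

theorem one_sub_pow_le (hp₀ : 0 ≤ p) (hp₁ : p ≤ 1) (t : ℕ) :
    (1 - p) ^ t ≤ 1 - t * p + t.choose 2 * p ^ 2 := by
  induction t with
  | zero => simp
  | succ t ih =>
    have hcubic : 0 ≤ (t.choose 2 : R) * p ^ 3 := by positivity
    calc (1 - p) ^ (t + 1) = (1 - p) ^ t * (1 - p) := pow_succ _ _
      _ ≤ (1 - t * p + t.choose 2 * p ^ 2) * (1 - p) :=
        mul_le_mul_of_nonneg_right ih (sub_nonneg.2 hp₁)
      _ = 1 - (t + 1) * p + (t + t.choose 2) * p ^ 2 - t.choose 2 * p ^ 3 := by ring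
      _ ≤ 1 - (t + 1) * p + (t + t.choose 2) * p ^ 2 := sub_le_self _ hcubic
      _ = 1 - (t + 1 : ℕ) * p + (t + 1).choose 2 * p ^ 2 := by
        rw [Nat.choose_succ_succ' t 1, Nat.choose_one_right]
        push_cast
        rfl

theorem bonferroni_le_probBinomialGeTwo (hp : p ≤ 2) :
    ∀ t : ℕ, t.choose 2 * p ^ 2 - 2 * t.choose 3 * p ^ 3 ≤ probBinomialGeTwo t p
  | 0 => by simp [probBinomialGeTwo]
  | 1 => by simp [probBinomialGeTwo, Nat.choose]
  | t + 2 => by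
    have absorb := cast_add_one_mul_choose (R := R) t 1
    have pascal₂ := Nat.choose_succ_succ' (t + 1) 1
    have pascal₃ := Nat.choose_succ_succ' (t + 1) 2
    simp only [Nat.choose_one_right, Nat.cast_one, Nat.reduceAdd] at absorb pascal₂ pascal₃
    calc ((t + 2).choose 2 : R) * p ^ 2 - 2 * (t + 2).choose 3 * p ^ 3
        = (t + 1).choose 2 * p ^ 2 - 2 * (t + 1).choose 3 * p ^ 3
            + (t + 1) * p ^ 2 * (1 - t * p) := by
          rw [pascal₂, pascal₃]
          push_cast
          linear_combination p ^ 3 * absorb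
      _ ≤ probBinomialGeTwo (t + 1) p + (t + 1) * p ^ 2 * (1 - p) ^ t := by
          gcongr
          · exact bonferroni_le_probBinomialGeTwo hp (t + 1)
          · exact one_sub_mul_le_one_sub_pow hp t
      _ = probBinomialGeTwo (t + 2) p := (probBinomialGeTwo_add_two t p).symm

theorem probBinomialGeTwo_le_bonferroni (hp₀ : 0 ≤ p) (hp₁ : p ≤ 1) :
    ∀ t : ℕ, probBinomialGeTwo t p ≤
      t.choose 2 * p ^ 2 - 2 * t.choose 3 * p ^ 3 + 3 * t.choose 4 * p ^ 4
  | 0 => by simp [probBinomialGeTwo]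
  | 1 => by simp [probBinomialGeTwo, Nat.choose]
  | t + 2 => by
    have absorb₁ := cast_add_one_mul_choose (R := R) t 1
    have absorb₂ := cast_add_one_mul_choose (R := R) t 2
    have pascal₂ := Nat.choose_succ_succ' (t + 1) 1
    have pascal₃ := Nat.choose_succ_succ' (t + 1) 2
    have pascal₄ := Nat.choose_succ_succ' (t + 1) 3
    simp only [Nat.choose_one_right, Nat.cast_one, Nat.cast_ofNat, Nat.reduceAdd]
      at absorb₁ absorb₂ pascal₂ pascal₃ pascal₄
    calc probBinomialGeTwo (t + 2) p
        = probBinomialGeTwo (t + 1) p + (t + 1) * p ^ 2 * (1 - p) ^ t :=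
          probBinomialGeTwo_add_two t p
      _ ≤ ((t + 1).choose 2 * p ^ 2 - 2 * (t + 1).choose 3 * p ^ 3
            + 3 * (t + 1).choose 4 * p ^ 4)
            + (t + 1) * p ^ 2 * (1 - t * p + t.choose 2 * p ^ 2) := by
          gcongr
          · exact probBinomialGeTwo_le_bonferroni hp₀ hp₁ (t + 1)
          · exact one_sub_pow_le hp₀ hp₁ t
      _ = (t + 2).choose 2 * p ^ 2 - 2 * (t + 2).choose 3 * p ^ 3
            + 3 * (t + 2).choose 4 * p ^ 4 := by
          rw [pascal₂, pascal₃, pascal₄]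
          push_cast
          linear_combination (-p ^ 3) * absorb₁ + p ^ 4 * absorb₂

end Bonferroni

section Remainder

variable {K : Type*} [Field K] [LinearOrder K] [IsStrictOrderedRing K] {t : ℕ} {p : K}

theorem cast_choose_three (t : ℕ) : (t.choose 3 : K) = t * (t - 1) * (t - 2) / 6 := by
  induction t with
  | zero => simp
  | succ t ih =>
    rw [Nat.choose_succ_succ' t 2, Nat.cast_add, ih, Nat.cast_choose_two]
    push_cast
    ring

theorem bonferroni_eq (t : ℕ) (p : K) :
    t.choose 2 * p ^ 2 - 2 * t.choose 3 * p ^ 3 =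
      (t * p) ^ 2 / 2 - (t * p ^ 2 / 2 + (t * p) ^ 3 / 3) + t * (t - 2 / 3) * p ^ 3 := by
  rw [Nat.cast_choose_two, cast_choose_three]
  ring

theorem sub_le_probBinomialGeTwo (hp₀ : 0 ≤ p) (hp₁ : p ≤ 2) (ht : t ≠ 0) :
    (t * p) ^ 2 / 2 - (t * p ^ 2 / 2 + (t * p) ^ 3 / 3) ≤ probBinomialGeTwo t p := by
  have ht₁ : (1 : K) ≤ t := Nat.one_le_cast.2 (Nat.one_le_iff_ne_zero.2 ht)
  have hcubic : 0 ≤ t * (t - 2 / 3) * p ^ 3 :=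
    mul_nonneg (mul_nonneg (by positivity) (by linarith)) (by positivity)
  linarith [bonferroni_le_probBinomialGeTwo hp₁ t, bonferroni_eq t p]

theorem probBinomialGeTwo_le_sub (hp₀ : 0 ≤ p) (hp₁ : p ≤ 1) (t : ℕ) :
    probBinomialGeTwo t p ≤
      (t * p) ^ 2 / 2 - (1 - 2 * (t * p)) * (t * p ^ 2 / 2 + (t * p) ^ 3 / 3) := by
  have hquartic : 3 * (t.choose 4 : K) * p ^ 4 ≤ (t * p) ^ 4 / 8 :=
    calc 3 * (t.choose 4 : K) * p ^ 4 ≤ 3 * (t ^ 4 / (Nat.factorial 4 : ℕ)) * p ^ 4 := by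
          gcongr
          exact Nat.choose_le_pow_div 4 t
      _ = (t * p) ^ 4 / 8 := by
          rw [show Nat.factorial 4 = 24 from rfl]
          push_cast
          ring
  have hcubic : t * (t - 2 / 3) * p ^ 3 ≤ 2 * (t * p) * (t * p ^ 2 / 2) := by
    have : 0 ≤ (t : K) * p ^ 3 := by positivity
    linarith
  have hquartic_nonneg : 0 ≤ (t * p) ^ 4 := by positivity
  linarith [probBinomialGeTwo_le_bonferroni hp₀ hp₁ t, bonferroni_eq t p]

theorem relative_remainder_mem_Icc (hp₀ : 0 < p) (hp₁ : p ≤ 1) (ht : t ≠ 0) :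
    (probBinomialGeTwo t p - (t * p) ^ 2 / 2) / (t * p ^ 2 / 2 + (t * p) ^ 3 / 3) ∈
      Set.Icc (-1) (-1 + 2 * (t * p)) := by
  have hden : 0 < t * p ^ 2 / 2 + (t * p) ^ 3 / 3 := by positivity
  rw [Set.mem_Icc, le_div_iff₀ hden, div_le_iff₀ hden]
  constructor
  · linarith [sub_le_probBinomialGeTwo hp₀.le (hp₁.trans one_le_two) ht]
  · linarith [probBinomialGeTwo_le_sub hp₀.le hp₁ t]

end Remainder

theorem binomial_ge_two_expansion_general {ι : Type*} {l : Filter ι} {t : ι → ℕ} {p : ι → ℝ}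
    (hp : ∀ᶠ i in l, 0 < p i) (ht : ∀ᶠ i in l, t i ≠ 0)
    (htp : Tendsto (fun i => (t i : ℝ) * p i) l (nhds 0)) :
    Tendsto (fun i =>
        (probBinomialGeTwo (t i) (p i) - ((t i : ℝ) * p i) ^ 2 / 2) /
          ((t i : ℝ) * p i ^ 2 / 2 + ((t i : ℝ) * p i) ^ 3 / 3))
      l (nhds (-1)) := by
  have hbounds : ∀ᶠ i in l,
      (probBinomialGeTwo (t i) (p i) - ((t i : ℝ) * p i) ^ 2 / 2) /
          ((t i : ℝ) * p i ^ 2 / 2 + ((t i : ℝ) * p i) ^ 3 / 3) ∈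
        Set.Icc (-1) (-1 + 2 * ((t i : ℝ) * p i)) := by
    filter_upwards [hp, ht, htp.eventually_le_const one_pos] with i hpi hti htpi
    have hp_le : p i ≤ t i * p i :=
      le_mul_of_one_le_left hpi.le (Nat.one_le_cast.2 (Nat.one_le_iff_ne_zero.2 hti))
    exact relative_remainder_mem_Icc hpi (hp_le.trans htpi) hti
  have hupper : Tendsto (fun i => -1 + 2 * ((t i : ℝ) * p i)) l (nhds (-1)) := by
    simpa only [mul_zero, add_zero] using (htp.const_mul 2).const_add (-1)
  exact tendsto_of_tendsto_of_tendsto_of_le_of_le' tendsto_const_nhds hupper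
    (hbounds.mono fun _ h => h.1) (hbounds.mono fun _ h => h.2)

/-- expansion (4.24): if `t_n → ∞` and `t_n p_n → 0`, then
`P(Bin(t_n, p_n) ≥ 2) = (t_n p_n)²/2 - (t_n p_n²/2 + (t_n p_n)³/3)(1 + o(1))`,
where `P(Bin(t,p) ≥ 2) = 1 - (1-p)^t - tp(1-p)^{t-1}`. -/
theorem binomial_ge_two_expansion
    (t : ℕ → ℕ) (p : ℕ → ℝ) (hp : ∀ n, p n ∈ Set.Ioo (0 : ℝ) 1)
    (ht : Tendsto t atTop atTop)
    (htp : Tendsto (fun n : ℕ => (t n : ℝ) * p n) atTop (nhds 0)) :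
    Tendsto (fun n : ℕ =>
        ((1 - (1 - p n) ^ t n - (t n : ℝ) * p n * (1 - p n) ^ (t n - 1)) -
            ((t n : ℝ) * p n) ^ 2 / 2) /
          ((t n : ℝ) * p n ^ 2 / 2 + ((t n : ℝ) * p n) ^ 3 / 3))
      atTop (nhds (-1)) := by
  exact binomial_ge_two_expansion_general (.of_forall fun n => (hp n).1)
    (ht.eventually_ne_atTop 0) htp
end

section
/- Let (p_n) be a sequence in (0,1) with n p_n → ∞ and (2 p_n n)/(log n + log(p_n n)) → ∞, let C > 0 be a constant, and let (K_n) be integers with 0 ≤ n − K_n ≤ C p_n n² e^{−p_n n} for all large n. Then (n − K_n)(1 − p_n)^{K_n} → 0 as n → ∞. -/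
/-!
Write `x = p n`. Since `1 - p ≤ e^{-p}`, the bound `B = C x n e^{-x}` on `n - K` gives
`(n - K)(1 - p)^K ≤ B e^{-p K} ≤ B e^{p B - x} = C e^{-(2x - log n - log x)} e^{C x² e^{-x}}`.
The last factor tends to `1`, so the left-hand side vanishes as soon as
`2x - (log n + log x) → ∞`, and this follows when `2x` is of larger order than `log n + log x`.
-/

open Filter

theorem tendsto_sub_atTop_of_tendsto_div_atTop {ι 𝕜 : Type*} [Field 𝕜] [LinearOrder 𝕜]
    [IsStrictOrderedRing 𝕜] {l : Filter ι} {f g : ι → 𝕜} (hf : Tendsto f l atTop)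
    (hfg : Tendsto (fun i => f i / g i) l atTop) :
    Tendsto (fun i => f i - g i) l atTop := by
  refine tendsto_atTop_mono' l ?_ (hf.atTop_div_const (zero_lt_two' 𝕜))
  filter_upwards [hf.eventually_gt_atTop 0, hfg.eventually_ge_atTop 2] with i hfi hratio
  have hgi : 0 < g i := (div_pos_iff_of_pos_left hfi).mp (zero_lt_two.trans_le hratio)
  have hle : 2 * g i ≤ f i := (le_div_iff₀ hgi).mp hratio
  linarith

theorem one_sub_pow_le_exp_neg_mul {p : ℝ} (hp : p ≤ 1) (k : ℕ) :
    (1 - p) ^ k ≤ Real.exp (-(p * k)) :=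
  calc (1 - p) ^ k ≤ Real.exp (-p) ^ k :=
        pow_le_pow_left₀ (sub_nonneg.mpr hp) (Real.one_sub_le_exp_neg p) k
    _ = Real.exp (-(p * k)) := by rw [← Real.exp_nat_mul]; ring_nf

theorem sub_mul_one_sub_pow_le {p n B : ℝ} {k : ℕ} (hp₀ : 0 ≤ p) (hp₁ : p ≤ 1)
    (hkn : k ≤ n) (hB : n - k ≤ B) :
    (n - k) * (1 - p) ^ k ≤ B * Real.exp (p * B - p * n) := by
  have hB₀ : 0 ≤ B := (sub_nonneg.mpr hkn).trans hB
  have hexp : -(p * k) ≤ p * B - p * n := by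
    linarith [mul_le_mul_of_nonneg_left hB hp₀]
  calc (n - k) * (1 - p) ^ k ≤ B * Real.exp (-(p * k)) :=
        mul_le_mul hB (one_sub_pow_le_exp_neg_mul hp₁ k)
          (pow_nonneg (sub_nonneg.mpr hp₁) k) hB₀
    _ ≤ B * Real.exp (p * B - p * n) := by gcongr

theorem mul_exp_sub_eq_exp_neg_log_gap {p n : ℝ} (C : ℝ) (hp : 0 < p) (hn : 0 < n) :
    C * p * n ^ 2 * Real.exp (-(p * n)) *
        Real.exp (p * (C * p * n ^ 2 * Real.exp (-(p * n))) - p * n) =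
      C * Real.exp (-(2 * p * n - (Real.log n + Real.log (p * n)))) *
        Real.exp (C * ((p * n) ^ 2 * Real.exp (-(p * n)))) := by
  have hgap : Real.exp (-(2 * p * n - (Real.log n + Real.log (p * n)))) =
      n * (p * n) * (Real.exp (-(p * n)) * Real.exp (-(p * n))) := by
    rw [← Real.exp_add, ← Real.exp_log (mul_pos hn (mul_pos hp hn)), ← Real.exp_add,
      Real.log_mul hn.ne' (mul_pos hp hn).ne']
    ring_nf
  have hsplit : Real.exp (p * (C * p * n ^ 2 * Real.exp (-(p * n))) - p * n) =
      Real.exp (C * ((p * n) ^ 2 * Real.exp (-(p * n)))) * Real.exp (-(p * n)) := by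
    rw [← Real.exp_add]
    ring_nf
  rw [hgap, hsplit]
  ring

theorem remaining_vertices_to_zero_general {ι : Type*} {l : Filter ι} {p n : ι → ℝ} {C : ℝ}
    {K : ι → ℕ} (hp : ∀ᶠ i in l, p i ≤ 1)
    (hpn : Tendsto (fun i => p i * n i) l atTop)
    (hgap : Tendsto (fun i => 2 * p i * n i - (Real.log (n i) + Real.log (p i * n i))) l atTop)
    (hK : ∀ᶠ i in l, K i ≤ n i ∧
      n i - K i ≤ C * p i * n i ^ 2 * Real.exp (-(p i * n i))) :
    Tendsto (fun i => (n i - K i) * (1 - p i) ^ K i) l (nhds 0) := by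
  have hgap_factor := (Real.tendsto_exp_neg_atTop_nhds_zero.comp hgap).const_mul C
  have hcorrection := (Real.continuous_exp.tendsto _).comp
    (((Real.tendsto_pow_mul_exp_neg_atTop_nhds_zero 2).comp hpn).const_mul C)
  have hbound := hgap_factor.mul hcorrection
  rw [mul_zero, zero_mul] at hbound
  refine squeeze_zero' ?_ ?_ hbound
  · filter_upwards [hp, hK] with i hpi hKi
    exact mul_nonneg (sub_nonneg.mpr hKi.1) (pow_nonneg (sub_nonneg.mpr hpi) _)
  · filter_upwards [hp, hK, hpn.eventually_gt_atTop 0] with i hpi ⟨hKn, hrem⟩ hpos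
    have hp₀ : 0 < p i := pos_of_mul_pos_left hpos ((Nat.cast_nonneg _).trans hKn)
    have hn₀ : 0 < n i := pos_of_mul_pos_right hpos hp₀.le
    exact (sub_mul_one_sub_pow_le hp₀.le hpi hKn hrem).trans_eq
      (mul_exp_sub_eq_exp_neg_log_gap C hp₀ hn₀)

/-- the estimate (4.37): if `np → ∞`,
`2pn/(log n + log(pn)) → ∞`, `C > 0` and `0 ≤ n - K_n ≤ C p n² e^{-pn}` for all
large `n`, then `(n - K_n)(1 - p)^{K_n} → 0`. -/
theorem remaining_vertices_to_zero
    (p : ℕ → ℝ) (hp : ∀ n, p n ∈ Set.Ioo (0 : ℝ) 1)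
    (h1 : Tendsto (fun n : ℕ => (n : ℝ) * p n) atTop atTop)
    (h2 : Tendsto (fun n : ℕ =>
        2 * p n * (n : ℝ) / (Real.log n + Real.log (p n * n))) atTop atTop)
    (C : ℝ) (hC : 0 < C) (K : ℕ → ℕ)
    (hK : ∀ᶠ n : ℕ in atTop, K n ≤ n ∧
        (n : ℝ) - (K n : ℝ) ≤ C * p n * (n : ℝ) ^ 2 * Real.exp (-(p n * n))) :
    Tendsto (fun n : ℕ => ((n : ℝ) - (K n : ℝ)) * (1 - p n) ^ K n)
      atTop (nhds 0) := by
  have h2pn : Tendsto (fun n : ℕ => 2 * p n * (n : ℝ)) atTop atTop :=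
    (h1.const_mul_atTop two_pos).congr fun n => by ring
  exact remaining_vertices_to_zero_general (.of_forall fun n => (hp n).2.le)
    (h1.congr fun n => mul_comm _ _) (tendsto_sub_atTop_of_tendsto_div_atTop h2pn h2)
    (hK.mono fun _ hn => ⟨Nat.cast_le.mpr hn.1, hn.2⟩)
end
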